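/- Let X and Y be jointly distributed random variables taking values in finite sets 𝒳 and 𝒴 respectively, with p := P(X = Y) > 0, and let m ≥ 1 be an integer. Then there exist (on a possibly enlarged probability space carrying randomness independent of (X,Y)) a function f : 𝒳 ∪ 𝒴 → {1, …, m}, a random variable W_1 := f(X), a random variable W_2 that is a function of (Y, W_1) and of randomness independent of (X, Y), and random strings K_A ∈ {0,1}* (a function of (X, W_1, W_2)), K_B ∈ {0,1}* (a function of (Y, W_1, W_2)), and K ∈ {0,1}*, such that: K is a conditionally randomly-stopped bit sequence given (W_1, W_2); P(K_A = K_B = K) ≥ 1 − (1 − p)/m; and E[|K|·1{K_A = K_B = K}] ≥ p·(H(X | X = Y) − log₂ m − 2), where H(X | X = Y) denotes the Shannon entropy of the conditional distribution of X given the event {X = Y}. -/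

import Mathlib

open MeasureTheory ProbabilityTheory
open scoped ENNReal

/-- `K` is a randomly-stopped bit sequence under the probability measure `μ`. -/
def IsRSBS {Ω : Type*} [MeasurableSpace Ω] (μ : Measure Ω) (K : Ω → List Bool) : Prop :=
  ∀ (pre : List Bool) (b : Bool),
    0 < μ {ω | pre.length < (K ω).length ∧ (K ω).take pre.length = pre} →
    μ {ω | pre.length < (K ω).length ∧ (K ω).take (pre.length + 1) = pre ++ [b]} =
      2⁻¹ * μ {ω | pre.length < (K ω).length ∧ (K ω).take pre.length = pre}

/-- `K` is a conditionally randomly-stopped bit sequence given `W`. -/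
def IsCondRSBS {Ω β : Type*} [MeasurableSpace Ω] (μ : Measure Ω) (K : Ω → List Bool)
    (W : Ω → β) : Prop :=
  ∀ w : β, 0 < μ {ω | W ω = w} → IsRSBS (μ[|{ω | W ω = w}]) K

/-! For a uniformly random `f : α → {1, …, m}`, distinct symbols collide with probability `1/m`, so
some `f` satisfies `P(X ≠ Y, f X = f Y) ≤ (1 - p)/m`. Given `X = Y` and `f X = w`, write the law of
`X` as a mixture `∑ⱼ 2⁻ʲ⁻¹ Bⱼ`, where each `Bⱼ` is the law of the leaf reached by a walk down a
binary tree that turns by fair coin flips. Bob announces a number `j` drawn from its posterior given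
his own symbol. When `X = Y`, the number `j` is then geometric and `X` has law `Bⱼ` given `j`, so
the path to the leaf `X` is a randomly-stopped sequence of fair bits; this is the key, unless Bob
sees that the hashes differ, which makes the key empty. The ideal key copies the path when `X = Y`
and is otherwise a fresh fair path, hence is conditionally fair throughout.

On `X = Y`, a leaf `X = x` at depth `l` of `Bⱼ` has conditional probability at least `2⁻ʲ⁻¹⁻ˡ`, so
`-log₂ P(X = x | X = Y, f X = w) ≤ j + 1 + l`. In expectation, the geometric number costs
`E[j + 1] = 2`, and conditioning on `f X` costs the entropy of `f X`, at most `log₂ m`. -/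

/-! ### Fairly stopped bit strings -/

lemma toOuterMeasure_univ {α : Type*} (p : PMF α) : p.toOuterMeasure Set.univ = 1 :=
  (PMF.toOuterMeasure_apply_eq_one_iff _ _).2 (Set.subset_univ _)

lemma toOuterMeasure_ne_top {α : Type*} (p : PMF α) (s : Set α) : p.toOuterMeasure s ≠ ⊤ :=
  ne_top_of_le_ne_top ENNReal.one_ne_top
    ((measure_mono (Set.subset_univ s)).trans_eq (toOuterMeasure_univ p))

lemma toOuterMeasure_inter_add_sdiff {α : Type*} (p : PMF α) (S T : Set α) :
    p.toOuterMeasure (S ∩ T) + p.toOuterMeasure (S \ T) = p.toOuterMeasure S := by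
  have hT : MeasurableSet[p.toOuterMeasure.caratheodory] T := by
    rw [PMF.toOuterMeasure_caratheodory]; trivial
  exact (p.toOuterMeasure.isCaratheodory_iff.1 hT S).symm

/-- A law on bit strings is fairly stopped when, after every prefix, a next bit that is revealed at
all is equally likely to be `true` or `false`: this is the law of a randomly-stopped bit sequence,
written without conditioning. -/
def IsFairlyStopped (p : PMF (List Bool)) : Prop :=
  ∀ s : List Bool,
    p.toOuterMeasure {k | s ++ [true] <+: k} = p.toOuterMeasure {k | s ++ [false] <+: k}

lemma isFairlyStopped_pure_nil : IsFairlyStopped (PMF.pure []) := by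
  intro s
  simp [PMF.toOuterMeasure_pure_apply]

lemma isFairlyStopped_uniformOfFintype_bool_bind_cons {p : Bool → PMF (List Bool)}
    (hp : ∀ b, IsFairlyStopped (p b)) :
    IsFairlyStopped ((PMF.uniformOfFintype Bool).bind fun b ↦ (p b).map (List.cons b)) := by
  rintro (_ | ⟨b, s⟩)
  · simp [PMF.toOuterMeasure_map_apply, List.cons_prefix_cons, toOuterMeasure_univ]
  · have hs := hp b s
    cases b <;> simp [PMF.toOuterMeasure_map_apply, List.cons_prefix_cons, hs]

lemma append_singleton_prefix_iff (s k : List Bool) (b : Bool) :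
    s ++ [b] <+: k ↔ s.length < k.length ∧ k.take (s.length + 1) = s ++ [b] := by
  rw [List.prefix_iff_eq_take, List.length_append, List.length_singleton]
  refine ⟨fun h ↦ ⟨?_, h.symm⟩, fun h ↦ h.2.symm⟩
  have hlength := congrArg List.length h
  simp only [List.length_append, List.length_singleton, List.length_take] at hlength
  omega

lemma append_true_or_false_prefix_iff (s k : List Bool) :
    s ++ [true] <+: k ∨ s ++ [false] <+: k ↔ s.length < k.length ∧ k.take s.length = s := by
  constructor
  · rintro (h | h) <;>
    exact ⟨((append_singleton_prefix_iff _ _ _).1 h).1,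
      (List.prefix_iff_eq_take.1 ((List.prefix_append _ _).trans h)).symm⟩
  · rintro ⟨hlt, htake⟩
    have hnext : s ++ [k[s.length]] <+: k := by
      rw [append_singleton_prefix_iff, List.take_succ_eq_append_getElem hlt, htake]
      exact ⟨hlt, rfl⟩
    cases hb : k[s.length] <;> simp_all

lemma IsFairlyStopped.toOuterMeasure_next {p : PMF (List Bool)} (hp : IsFairlyStopped p)
    (s : List Bool) (b : Bool) :
    p.toOuterMeasure {k | s.length < k.length ∧ k.take (s.length + 1) = s ++ [b]} =
      2⁻¹ * p.toOuterMeasure {k | s.length < k.length ∧ k.take s.length = s} := by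
  have hdisj : Disjoint {k : List Bool | s ++ [true] <+: k} {k | s ++ [false] <+: k} := by
    rw [Set.disjoint_left]
    intro k htrue hfalse
    simpa using List.prefix_of_prefix_length_le htrue hfalse (by simp)
  have hsplit := toOuterMeasure_inter_add_sdiff p
    ({k | s ++ [true] <+: k} ∪ {k | s ++ [false] <+: k}) {k | s ++ [true] <+: k}
  rw [Set.union_inter_cancel_left, Set.union_sdiff_cancel_left hdisj.inter_eq.subset] at hsplit
  simp_rw [← append_true_or_false_prefix_iff, ← append_singleton_prefix_iff, Set.ofPred_or]
  rw [← hsplit, ← hp s, ← two_mul, ← mul_assoc, ENNReal.inv_mul_cancel (by simp) (by simp), one_mul]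
  cases b
  · exact (hp s).symm
  · rfl

lemma isCondRSBS_of_conditional_law {Ω β : Type*} [MeasurableSpace Ω] {μ : Measure Ω}
    [IsFiniteMeasure μ] {K : Ω → List Bool} {W : Ω → β} (hW : ∀ w, MeasurableSet {ω | W ω = w})
    {κ : β → PMF (List Bool)} (hκ : ∀ w, IsFairlyStopped (κ w))
    (hlaw : ∀ w A, μ {ω | W ω = w ∧ K ω ∈ A} = μ {ω | W ω = w} * (κ w).toOuterMeasure A) :
    IsCondRSBS μ K W := by
  intro w hw s b _
  have hcond (A : Set (List Bool)) : μ[|{ω | W ω = w}] {ω | K ω ∈ A} = (κ w).toOuterMeasure A := by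
    rw [cond_apply (hW w)]
    change _ * μ {ω | W ω = w ∧ K ω ∈ A} = _
    rw [hlaw, ← mul_assoc, ENNReal.inv_mul_cancel hw.ne' (measure_ne_top _ _), one_mul]
  exact (hcond _).trans (((hκ w).toOuterMeasure_next s b).trans (congrArg _ (hcond _).symm))

/-! ### Dyadic codes -/

lemma map_congr_of_support {α β : Type*} {p : PMF α} {f g : α → β}
    (h : ∀ x ∈ p.support, f x = g x) :
    p.map f = p.map g := by
  ext b
  simp only [PMF.map_apply]
  refine tsum_congr fun x ↦ ?_
  by_cases hx : p x = 0
  · simp [hx]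
  · rw [h x ((p.mem_support_iff x).2 hx)]

/-- A randomized symbol together with a binary code that spells it in fair bits: symbols of code
length `l` have probability `2⁻ˡ`, as the leaves of a complete binary tree do. The code of a
symbol outside the support carries no information. -/
structure DyadicCode (α : Type*) where
  law : PMF α
  code : α → List Bool
  law_eq : ∀ x, law x ≠ 0 → law x = 2⁻¹ ^ (code x).length
  fair : IsFairlyStopped (law.map code)

namespace DyadicCode

variable {α : Type*}

/-- The one-leaf tree, which spells `x` by the empty string. -/
noncomputable def leaf (x : α) : DyadicCode α where
  law := PMF.pure x
  code _ := []
  law_eq y hy := by simpa [PMF.pure_apply] using hy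
  fair := by simpa [PMF.pure_map] using isFairlyStopped_pure_nil

section Node

variable (B : Bool → DyadicCode α)

/-- The law of the tree with subtrees `B false` and `B true`: a fair bit selects the subtree. -/
noncomputable def nodeLaw : PMF α :=
  (PMF.uniformOfFintype Bool).bind fun b ↦ (B b).law

open Classical in
/-- The code of the tree with subtrees `B false` and `B true`: the first bit names the subtree. -/
noncomputable def nodeCode (x : α) : List Bool :=
  if x ∈ (B true).law.support then true :: (B true).code x else false :: (B false).code x

variable {B}

lemma nodeLaw_apply (x : α) : nodeLaw B x = 2⁻¹ * ((B true).law x + (B false).law x) := by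
  simp [nodeLaw, mul_add]

lemma nodeCode_of_mem_support (hB : Disjoint (B false).law.support (B true).law.support)
    {b : Bool} {x : α} (hx : x ∈ (B b).law.support) : nodeCode B x = b :: (B b).code x := by
  cases b
  · exact if_neg (Set.disjoint_left.1 hB hx)
  · exact if_pos hx

lemma nodeLaw_of_mem_support (hB : Disjoint (B false).law.support (B true).law.support)
    {b : Bool} {x : α} (hx : x ∈ (B b).law.support) : nodeLaw B x = 2⁻¹ * (B b).law x := by
  cases b
  · simp [nodeLaw_apply, (PMF.apply_eq_zero_iff _ _).2 (Set.disjoint_left.1 hB hx)]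
  · simp [nodeLaw_apply, (PMF.apply_eq_zero_iff _ _).2 (Set.disjoint_right.1 hB hx)]

lemma exists_mem_support_of_nodeLaw_ne_zero {x : α} (hx : nodeLaw B x ≠ 0) :
    ∃ b, x ∈ (B b).law.support := by
  by_contra! h
  simp only [PMF.mem_support_iff, not_not] at h
  simp [nodeLaw_apply, h] at hx

lemma isFairlyStopped_map_nodeCode (hB : Disjoint (B false).law.support (B true).law.support) :
    IsFairlyStopped ((nodeLaw B).map (nodeCode B)) := by
  have hmap : (nodeLaw B).map (nodeCode B) =
      (PMF.uniformOfFintype Bool).bind fun b ↦ ((B b).law.map (B b).code).map (List.cons b) := by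
    rw [nodeLaw, PMF.map_bind]
    congr 1
    funext b
    rw [PMF.map_comp]
    exact map_congr_of_support fun x hx ↦ nodeCode_of_mem_support hB hx
  rw [hmap]
  exact isFairlyStopped_uniformOfFintype_bool_bind_cons fun b ↦ (B b).fair

/-- The tree with subtrees `B false` and `B true`. -/
noncomputable def node (hB : Disjoint (B false).law.support (B true).law.support) :
    DyadicCode α where
  law := nodeLaw B
  code := nodeCode B
  law_eq x hx := by
    obtain ⟨b, hb⟩ := exists_mem_support_of_nodeLaw_ne_zero hx
    rw [nodeLaw_of_mem_support hB hb, nodeCode_of_mem_support hB hb, (B b).law_eq x hb,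
      List.length_cons, pow_succ']
  fair := isFairlyStopped_map_nodeCode hB

lemma exists_code_node (hB : Disjoint (B false).law.support (B true).law.support) {x : α}
    (hx : (node hB).law x ≠ 0) :
    ∃ b, (B b).law x ≠ 0 ∧ (node hB).code x = b :: (B b).code x := by
  obtain ⟨b, hb⟩ := exists_mem_support_of_nodeLaw_ne_zero hx
  exact ⟨b, hb, nodeCode_of_mem_support hB hb⟩

end Node

lemma sum_inv_two_pow_pred {S : Finset α} {l : α → ℕ} (hl : ∀ x ∈ S, l x ≠ 0) :
    ∑ x ∈ S, (2⁻¹ : ℝ≥0∞) ^ (l x - 1) = 2 * ∑ x ∈ S, (2⁻¹ : ℝ≥0∞) ^ l x := by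
  rw [Finset.mul_sum]
  refine Finset.sum_congr rfl fun x hx ↦ ?_
  obtain ⟨n, hn⟩ := Nat.exists_eq_succ_of_ne_zero (hl x hx)
  rw [hn, Nat.succ_sub_one, pow_succ', ← mul_assoc, ENNReal.mul_inv_cancel (by simp) (by simp),
    one_mul]

open Classical in
lemma sum_support_filter_inv_two_pow_le (B : DyadicCode α) {S : Finset α} {l : α → ℕ}
    (hB : ∀ x, B.law x ≠ 0 → (B.code x).length = l x) :
    ∑ x ∈ S with x ∈ B.law.support, (2⁻¹ : ℝ≥0∞) ^ l x ≤ 1 := calc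
  _ = ∑ x ∈ S with x ∈ B.law.support, B.law x := by
      refine Finset.sum_congr rfl fun x hx ↦ ?_
      have hx' := (PMF.mem_support_iff _ _).1 (Finset.mem_filter.1 hx).2
      rw [B.law_eq x hx', hB x hx']
  _ ≤ ∑' x, B.law x := ENNReal.sum_le_tsum _
  _ = 1 := B.law.tsum_coe

lemma exists_length_eq_of_disjoint {S : Finset α} {l : α → ℕ} {B₀ B₁ : DyadicCode α}
    (hdisj : Disjoint B₀.law.support B₁.law.support)
    (hB₀ : ∀ x, B₀.law x ≠ 0 → x ∈ S ∧ (B₀.code x).length + 1 = l x)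
    (hB₁ : ∀ x, B₁.law x ≠ 0 → x ∈ S ∧ (B₁.code x).length + 1 = l x) :
    ∃ B : DyadicCode α, ∀ x, B.law x ≠ 0 → x ∈ S ∧ (B.code x).length = l x := by
  refine ⟨node (B := fun b ↦ if b then B₁ else B₀) (by simpa using hdisj), fun x hx ↦ ?_⟩
  obtain ⟨b, hb, hcode⟩ := exists_code_node _ hx
  rw [hcode, List.length_cons]
  cases b
  · exact hB₀ x hb
  · exact hB₁ x hb

lemma exists_length_eq_of_eq_zero {S : Finset α} {l : α → ℕ} {x : α} (hxS : x ∈ S) (hx : l x = 0) :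
    ∃ B : DyadicCode α, ∀ y, B.law y ≠ 0 → y ∈ S ∧ (B.code y).length = l y := by
  refine ⟨leaf x, fun y hy ↦ ?_⟩
  obtain rfl : y = x := by simpa [leaf, PMF.pure_apply] using hy
  exact ⟨hxS, hx.symm⟩

/- Halving the lengths doubles the Kraft sum to at least `2`. The first subtree uses up mass exactly
`1` of it, so the symbols it leaves over still have Kraft sum at least `1`. -/
lemma exists_length_eq_of_one_le_sum (S : Finset α) (l : α → ℕ)
    (hS : 1 ≤ ∑ x ∈ S, (2⁻¹ : ℝ≥0∞) ^ l x) :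
    ∃ B : DyadicCode α, ∀ x, B.law x ≠ 0 → x ∈ S ∧ (B.code x).length = l x := by
  classical
  obtain ⟨N, hN⟩ : ∃ N, ∀ x ∈ S, l x ≤ N := ⟨S.sup l, fun x hx ↦ Finset.le_sup hx⟩
  induction N generalizing S l with
  | zero =>
    obtain ⟨x, hx⟩ : S.Nonempty := by
      rw [Finset.nonempty_iff_ne_empty]
      rintro rfl
      simp at hS
    exact exists_length_eq_of_eq_zero hx (Nat.le_zero.1 (hN x hx))
  | succ N ih =>
    by_cases hzero : ∃ x ∈ S, l x = 0
    · obtain ⟨x, hxS, hx⟩ := hzero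
      exact exists_length_eq_of_eq_zero hxS hx
    push Not at hzero
    have hpred : ∀ x ∈ S, l x - 1 ≤ N := fun x hx ↦ Nat.sub_le_of_le_add (hN x hx)
    have htwo : 1 + 1 ≤ ∑ x ∈ S, (2⁻¹ : ℝ≥0∞) ^ (l x - 1) := by
      rw [one_add_one_eq_two, sum_inv_two_pow_pred hzero]
      exact le_mul_of_one_le_right' hS
    obtain ⟨B₀, hB₀⟩ := ih S (fun x ↦ l x - 1) (le_self_add.trans htwo) hpred
    have hrest : 1 ≤ ∑ x ∈ S with x ∉ B₀.law.support, (2⁻¹ : ℝ≥0∞) ^ (l x - 1) := by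
      rw [← Finset.sum_filter_add_sum_filter_not S (· ∈ B₀.law.support)] at htwo
      have hused : ∑ x ∈ S with x ∈ B₀.law.support, (2⁻¹ : ℝ≥0∞) ^ (l x - 1) ≤ 1 :=
        B₀.sum_support_filter_inv_two_pow_le fun x hx ↦ (hB₀ x hx).2
      exact (ENNReal.add_le_add_iff_left ENNReal.one_ne_top).1 (htwo.trans (by gcongr))
    obtain ⟨B₁, hB₁⟩ := ih _ (fun x ↦ l x - 1) hrest fun x hx ↦ hpred x (Finset.mem_filter.1 hx).1
    refine exists_length_eq_of_disjoint
      (Set.disjoint_right.2 fun x hx ↦ (Finset.mem_filter.1 (hB₁ x hx).1).2)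
      (fun x hx ↦ ?_) (fun x hx ↦ ?_)
    · obtain ⟨hxS, hlength⟩ := hB₀ x hx
      exact ⟨hxS, by have := hzero x hxS; omega⟩
    · obtain ⟨hxS, hlength⟩ := hB₁ x hx
      have hxS := (Finset.mem_filter.1 hxS).1
      exact ⟨hxS, by have := hzero x hxS; omega⟩

lemma exists_inv_two_pow_bounds {q : ℝ≥0∞} (hq : q ≠ 0) (hq1 : q ≤ 1) :
    ∃ n : ℕ, q ≤ 2⁻¹ ^ n ∧ 2⁻¹ ^ n ≤ 2 * q := by
  classical
  have hex : ∃ n : ℕ, (2⁻¹ : ℝ≥0∞) ^ (n + 1) < q := by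
    obtain ⟨n, hn⟩ := ENNReal.exists_inv_two_pow_lt hq
    exact ⟨n, (pow_le_pow_right_of_le_one' (by simp) n.le_succ).trans_lt hn⟩
  refine ⟨Nat.find hex, ?_, ?_⟩
  · rcases hn : Nat.find hex with _ | n
    · simpa using hq1
    · exact not_lt.1 (Nat.find_min hex (hn ▸ n.lt_succ_self))
  · calc (2⁻¹ : ℝ≥0∞) ^ Nat.find hex
        = 2 * 2⁻¹ ^ (Nat.find hex + 1) := by
          rw [pow_succ', ← mul_assoc, ENNReal.mul_inv_cancel (by simp) (by simp), one_mul]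
      _ ≤ 2 * q := by gcongr; exact (Nat.find_spec hex).le

lemma exists_law_le_two_mul [Finite α] (q : PMF α) :
    ∃ B : DyadicCode α, ∀ x, B.law x ≤ 2 * q x := by
  classical
  have := Fintype.ofFinite α
  have hbounds : ∀ x, ∃ n : ℕ, q x ≠ 0 → q x ≤ 2⁻¹ ^ n ∧ (2⁻¹ : ℝ≥0∞) ^ n ≤ 2 * q x := fun x ↦ by
    by_cases hx : q x = 0
    · exact ⟨0, fun h ↦ (h hx).elim⟩
    · obtain ⟨n, hn⟩ := exists_inv_two_pow_bounds hx (q.coe_le_one x)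
      exact ⟨n, fun _ ↦ hn⟩
  choose l hl using hbounds
  have hkraft : 1 ≤ ∑ x with q x ≠ 0, (2⁻¹ : ℝ≥0∞) ^ l x := calc
    1 = ∑ x with q x ≠ 0, q x := by
        rw [Finset.sum_filter_ne_zero, ← tsum_fintype (L := .unconditional _), q.tsum_coe]
    _ ≤ _ := Finset.sum_le_sum fun x hx ↦ (hl x (Finset.mem_filter.1 hx).2).1
  obtain ⟨B, hB⟩ := exists_length_eq_of_one_le_sum _ l hkraft
  refine ⟨B, fun x ↦ ?_⟩
  by_cases hx : B.law x = 0
  · simp [hx]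
  · rw [B.law_eq x hx, (hB x hx).2]
    exact (hl x (Finset.mem_filter.1 (hB x hx).1).2).2

lemma exists_pmf_eq_half_add {p q : PMF α} (h : ∀ x, p x ≤ 2 * q x) :
    ∃ r : PMF α, ∀ x, q x = 2⁻¹ * (p x + r x) := by
  have hadd : ∑' x, (2 * q x - p x) + 1 = 1 + 1 := by
    rw [← p.tsum_coe, ← ENNReal.tsum_add]
    simp_rw [tsub_add_cancel_of_le (h _)]
    rw [ENNReal.tsum_mul_left, q.tsum_coe, p.tsum_coe, mul_one, one_add_one_eq_two]
  have htotal : ∑' x, (2 * q x - p x) = 1 :=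
    (ENNReal.add_left_inj ENNReal.one_ne_top).1 hadd
  refine ⟨⟨fun x ↦ 2 * q x - p x, htotal ▸ ENNReal.summable.hasSum⟩, fun x ↦ ?_⟩
  change q x = 2⁻¹ * (p x + (2 * q x - p x))
  rw [add_tsub_cancel_of_le (h x), ← mul_assoc, ENNReal.inv_mul_cancel (by simp) (by simp), one_mul]

/- Peel off a dyadic law with weight `1/2` and repeat with the remaining half. -/
lemma exists_tsum_law_eq [Finite α] (q : PMF α) :
    ∃ B : ℕ → DyadicCode α, ∀ x, ∑' j, 2⁻¹ ^ (j + 1) * (B j).law x = q x := by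
  have hstep : ∀ q : PMF α, ∃ (B : DyadicCode α) (r : PMF α), ∀ x, q x = 2⁻¹ * (B.law x + r x) :=
    fun q ↦ by
      obtain ⟨B, hB⟩ := exists_law_le_two_mul q
      exact ⟨B, exists_pmf_eq_half_add hB⟩
  choose B r hr using hstep
  refine ⟨fun j ↦ B (r^[j] q), fun x ↦ ?_⟩
  have hpartial (n : ℕ) :
      ∑ j ∈ Finset.range n, 2⁻¹ ^ (j + 1) * (B (r^[j] q)).law x + 2⁻¹ ^ n * (r^[n] q) x = q x := by
    induction n with
    | zero => simp
    | succ n ih =>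
      rw [Finset.sum_range_succ, Function.iterate_succ_apply', add_assoc, pow_succ, mul_assoc,
        mul_assoc, ← mul_add, ← mul_add, ← hr, ih]
  have hrest : Filter.Tendsto (fun n ↦ (2⁻¹ : ℝ≥0∞) ^ n * (r^[n] q) x) Filter.atTop (nhds 0) :=
    tendsto_of_tendsto_of_tendsto_of_le_of_le tendsto_const_nhds
      (ENNReal.tendsto_pow_atTop_nhds_zero_of_lt_one (by simp)) (fun _ ↦ zero_le)
      fun n ↦ mul_le_of_le_one_right' ((r^[n] q).coe_le_one x)
  have hlimit := (ENNReal.tendsto_nat_tsum fun j ↦ 2⁻¹ ^ (j + 1) * (B (r^[j] q)).law x).add hrest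
  simp_rw [hpartial, add_zero] at hlimit
  exact tendsto_nhds_unique hlimit tendsto_const_nhds

end DyadicCode

/-! ### Random hashing and joint laws -/

open Classical in
lemma card_mul_card_filter_apply_eq {α ι : Type*} [Fintype α] [Fintype ι] {x y : α} (hxy : x ≠ y) :
    Fintype.card ι * Finset.card {f : α → ι | f x = f y} = Fintype.card (α → ι) := by
  rw [← Finset.card_univ, ← Finset.card_product, ← Finset.card_univ]
  refine Finset.card_nbij' (fun t ↦ Function.update t.2 x t.1)
    (fun f ↦ (f x, Function.update f x (f y))) ?_ ?_ ?_ ?_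
  · simp
  · simp [Set.MapsTo, hxy.symm]
  · intro t ht
    have ht : t.2 x = t.2 y := by simpa using ht
    simp [hxy.symm, ← ht]
  · intro f _
    simp

open Classical in
lemma exists_card_mul_sum_collision_le {α ι : Type*} [Fintype α] [Fintype ι] [Nonempty ι]
    (w : α × α → ℝ) :
    ∃ f : α → ι, Fintype.card ι * ∑ a with a.1 ≠ a.2 ∧ f a.1 = f a.2, w a ≤
      ∑ a with a.1 ≠ a.2, w a := by
  have hcount (a : α × α) :
      ∑ f : α → ι, Fintype.card ι * (if a.1 ≠ a.2 ∧ f a.1 = f a.2 then w a else 0) =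
        ∑ _f : α → ι, if a.1 ≠ a.2 then w a else 0 := by
    by_cases ha : a.1 = a.2
    · simp [ha]
    · simp only [ne_eq, ha, not_false_eq_true, true_and, if_true]
      rw [← Finset.mul_sum, ← Finset.sum_filter, Finset.sum_const, Finset.sum_const, nsmul_eq_mul,
        nsmul_eq_mul, Finset.card_univ, ← card_mul_card_filter_apply_eq ha]
      push_cast
      ring
  have haverage : ∑ f : α → ι, Fintype.card ι * ∑ a with a.1 ≠ a.2 ∧ f a.1 = f a.2, w a =
      ∑ _f : α → ι, ∑ a with a.1 ≠ a.2, w a := by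
    simp_rw [Finset.sum_filter, Finset.mul_sum]
    rw [Finset.sum_comm, Finset.sum_comm (s := Finset.univ (α := α → ι))]
    exact Finset.sum_congr rfl fun a _ ↦ hcount a
  obtain ⟨f, -, hf⟩ := Finset.exists_le_of_sum_le Finset.univ_nonempty haverage.le
  exact ⟨f, hf⟩

section JointLaw

variable {α β γ : Type*}

lemma exists_map_nat_eq [Countable α] (p : PMF α) : ∃ (ρ : PMF ℕ) (s : ℕ → α), ρ.map s = p := by
  obtain ⟨e, he⟩ := exists_injective_nat α
  have : Nonempty α := p.support_nonempty.to_type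
  refine ⟨p.map e, Function.invFun e, ?_⟩
  rw [PMF.map_comp, Function.invFun_comp he, PMF.map_id]

lemma exists_common_seed {ι : Type*} [Finite ι] (c : ι → PMF ℕ) :
    ∃ (ρ : PMF ℕ) (s : ι → ℕ → ℕ), ∀ i, ρ.map (s i) = c i := by
  have := Fintype.ofFinite ι
  let q : PMF (ι → ℕ) := (Measure.pi fun i ↦ (c i).toMeasure).toPMF
  obtain ⟨ρ, s, hs⟩ := exists_map_nat_eq q
  refine ⟨ρ, fun i n ↦ s n i, fun i ↦ ?_⟩
  have hmarginal : q.map (Function.eval i) = c i := by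
    rw [← PMF.toMeasure_inj, ← PMF.toMeasure_map (hf := measurable_pi_apply i),
      Measure.toPMF_toMeasure]
    exact (measurePreserving_eval (fun i ↦ (c i).toMeasure) i).map_eq
  rw [← hmarginal, ← hs, PMF.map_comp]
  rfl

/-- The law of `(a, b, k)` when `a` is drawn from `p`, then `b` from `c a`, then `k` from
`κ a b`. -/
noncomputable def jointLaw (p : PMF α) (c : α → PMF β) (κ : α → β → PMF γ) : PMF (α × β × γ) :=
  p.bind fun a ↦ (c a).bind fun b ↦ (κ a b).map fun k ↦ (a, b, k)

lemma toOuterMeasure_jointLaw (p : PMF α) (c : α → PMF β) (κ : α → β → PMF γ)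
    (T : Set (α × β × γ)) :
    (jointLaw p c κ).toOuterMeasure T =
      ∑' a, p a * ∑' b, c a b * (κ a b).toOuterMeasure {k | (a, b, k) ∈ T} := by
  simp_rw [jointLaw, PMF.toOuterMeasure_bind_apply, PMF.toOuterMeasure_map_apply]
  rfl

lemma jointLaw_map_map (p : PMF α) {δ : Type*} (ρ : PMF δ) (s : α → δ → β) (κ : α → β → PMF γ) :
    (jointLaw p (fun _ ↦ ρ) fun a r ↦ κ a (s a r)).map (fun t ↦ (t.1, s t.1 t.2.1, t.2.2)) =
      jointLaw p (fun a ↦ ρ.map (s a)) κ := by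
  simp only [jointLaw, PMF.map_bind, PMF.bind_map, PMF.map_comp]
  rfl

end JointLaw

section Tsum

variable {α β : Type*}

lemma exists_pmf_mul_eq [Nonempty β] {g : β → ℝ≥0∞} (hg : ∑' b, g b ≠ ⊤) :
    ∃ p : PMF β, ∀ b, (∑' b, g b) * p b = g b := by
  by_cases hzero : ∑' b, g b = 0
  · refine ⟨PMF.pure (Classical.arbitrary β), fun b ↦ ?_⟩
    rw [hzero, zero_mul, ENNReal.tsum_eq_zero.1 hzero b]
  · refine ⟨PMF.normalize g hzero hg, fun b ↦ ?_⟩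
    rw [PMF.normalize_apply, mul_left_comm, ENNReal.mul_inv_cancel hzero hg, mul_one]

lemma tsum_prod_congr_of_diag {g h : α × α → ℝ≥0∞} (hdiag : ∑' x, g (x, x) = ∑' x, h (x, x))
    (hoff : ∀ a : α × α, a.1 ≠ a.2 → g a = h a) : ∑' a, g a = ∑' a, h a := by
  classical
  have hsplit (f : α × α → ℝ≥0∞) :
      ∑' a, f a = ∑' x, f (x, x) + ∑' a : α × α, if a.1 = a.2 then 0 else f a := by
    have hif : ∑' x, f (x, x) = ∑' a : α × α, if a.1 = a.2 then f a else 0 := by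
      rw [ENNReal.tsum_prod']
      simp
    rw [hif, ← ENNReal.tsum_add]
    exact tsum_congr fun a ↦ by split_ifs <;> simp
  rw [hsplit g, hsplit h, hdiag]
  congr 1
  exact tsum_congr fun a ↦ by split_ifs with ha; exacts [rfl, hoff a ha]

lemma tsum_mul_map (p : PMF α) (f : α → β) (g : β → ℝ≥0∞) :
    ∑' b, g b * p.map f b = ∑' a, g (f a) * p a := by
  classical
  simp_rw [PMF.map_apply, ← ENNReal.tsum_mul_left, mul_ite, mul_zero]
  rw [ENNReal.tsum_comm]
  simp

lemma tsum_toOuterMeasure_fiber_inter (p : PMF α) (f : α → β) (S : Set α) :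
    ∑' b, p.toOuterMeasure {a | f a = b ∧ a ∈ S} = p.toOuterMeasure S := by
  classical
  simp_rw [PMF.toOuterMeasure_apply, Set.indicator_apply, Set.mem_ofPred_eq, ite_and]
  rw [ENNReal.tsum_comm]
  simp

lemma tsum_succ_mul_inv_two_pow_succ :
    ∑' j : ℕ, ((j + 1 : ℕ) : ℝ≥0∞) * 2⁻¹ ^ (j + 1) = 2 := by
  have hreal : HasSum (fun j : ℕ ↦ ((j + 1 : ℕ) : ℝ) * 2⁻¹ ^ (j + 1)) 2 := by
    have hgeometric := hasSum_coe_mul_geometric_of_norm_lt_one (r := (2⁻¹ : ℝ)) (by norm_num)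
    have hshift := (hasSum_nat_add_iff' 1).2 hgeometric
    norm_num at hshift ⊢
    exact hshift
  calc ∑' j : ℕ, ((j + 1 : ℕ) : ℝ≥0∞) * 2⁻¹ ^ (j + 1)
      = ∑' j : ℕ, ENNReal.ofReal (((j + 1 : ℕ) : ℝ) * 2⁻¹ ^ (j + 1)) := by
        refine tsum_congr fun j ↦ ?_
        rw [ENNReal.ofReal_mul (by positivity), ENNReal.ofReal_natCast,
          ENNReal.ofReal_pow (by positivity), ENNReal.ofReal_inv_of_pos two_pos,
          ENNReal.ofReal_ofNat]
    _ = 2 := by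
        rw [← ENNReal.ofReal_tsum_of_nonneg (fun j ↦ by positivity) hreal.summable, hreal.tsum_eq,
          ENNReal.ofReal_ofNat]

end Tsum

namespace DyadicCode

variable {α : Type*}

/-- The law of the bit string that spells the random symbol. -/
noncomputable def keyLaw (B : DyadicCode α) : PMF (List Bool) :=
  B.law.map B.code

lemma law_mul_length_le_one (B : DyadicCode α) (x : α) :
    B.law x * (B.code x).length ≤ 1 := by
  by_cases hx : B.law x = 0
  · simp [hx]
  · rw [B.law_eq x hx, mul_comm, ← ENNReal.inv_pow, ← div_eq_mul_inv]
    refine ENNReal.div_le_of_le_mul ?_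
    rw [one_mul]
    exact_mod_cast Nat.lt_two_pow_self.le

lemma tsum_length_mul_keyLaw_le [Fintype α] (B : DyadicCode α) :
    ∑' k, (k.length : ℝ≥0∞) * B.keyLaw k ≤ Fintype.card α := by
  rw [keyLaw, tsum_mul_map, tsum_fintype]
  refine (Finset.sum_le_card_nsmul _ _ 1 fun x _ ↦ ?_).trans_eq (by simp)
  rw [mul_comm]
  exact B.law_mul_length_le_one x

end DyadicCode

section DiagMass

variable {α ι : Type*} {P : PMF (α × α)} {f : α → ι}

variable (P f) in
open Classical in
/-- The probability that `X = Y` and `f X = w`, when `(X, Y)` has law `P`. -/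
noncomputable def diagMass (w : ι) : ℝ≥0∞ :=
  ∑' x, if f x = w then P (x, x) else 0

lemma tsum_diagMass : ∑' w, diagMass P f w = ∑' x, P (x, x) := by
  simp_rw [diagMass]
  rw [ENNReal.tsum_comm]
  simp

lemma diagMass_ne_top (w : ι) : diagMass P f w ≠ ⊤ := by
  refine ne_top_of_le_ne_top P.tsum_coe_ne_top ((ENNReal.le_tsum w).trans ?_)
  rw [tsum_diagMass]
  exact ENNReal.tsum_comp_le_tsum_of_injective (fun x y h ↦ congrArg Prod.fst h) P

end DiagMass

/-! ### Key agreement schemes -/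

/-- A key agreement scheme: Alice announces `hash x` and Bob, when his own hash agrees, announces a
number `j` drawn from `sampler y`; then each spells his symbol by the code of
`block (hash x) j`. -/
structure KeyScheme (α ι : Type*) where
  hash : α → ι
  block : ι → ℕ → DyadicCode α
  sampler : α → PMF ℕ

namespace KeyScheme

variable {α ι : Type*} (S : KeyScheme α ι) (P : PMF (α × α))

open Classical in
/-- Bob's message `W₂`; `none` reports that his hash differs from Alice's. -/
noncomputable def bobMsg (y : α) (w : ι) (j : ℕ) : Option ℕ :=
  if S.hash y = w then some j else none

/-- The public discussion `(W₁, W₂)`. -/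
noncomputable def publicMsg (a : α × α) (j : ℕ) : ι × Option ℕ :=
  (S.hash a.1, S.bobMsg a.2 (S.hash a.1) j)

/-- The key that a user holding the symbol `x` derives from the public discussion. -/
def userKey (x : α) : ι × Option ℕ → List Bool
  | (w, some j) => (S.block w j).code x
  | (_, none) => []

/-- The conditional law of the ideal key given the public discussion. -/
noncomputable def idealLaw : ι × Option ℕ → PMF (List Bool)
  | (w, some j) => (S.block w j).keyLaw
  | (_, none) => PMF.pure []

open Classical in
/-- The law of the ideal key given `(X, Y)` and Bob's number: it copies the users' key when `X = Y`
and is otherwise drawn afresh from `idealLaw`. -/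
noncomputable def keyLaw (a : α × α) (j : ℕ) : PMF (List Bool) :=
  if a.1 = a.2 then PMF.pure (S.userKey a.1 (S.publicMsg a j)) else S.idealLaw (S.publicMsg a j)

/-- The joint law of `(X, Y)`, Bob's number and the ideal key when `(X, Y)` has law `P`. -/
noncomputable def law : PMF ((α × α) × ℕ × List Bool) :=
  jointLaw P (fun a ↦ S.sampler a.2) S.keyLaw

/-- The joint law of `(X, Y)`, Bob's number and a key drawn from `idealLaw` even when `X = Y`. -/
noncomputable def uncoupledLaw : PMF ((α × α) × ℕ × List Bool) :=
  jointLaw P (fun a ↦ S.sampler a.2) fun a j ↦ S.idealLaw (S.publicMsg a j)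

open Classical in
/-- Given `X = Y` and the hash `w`, Bob's number and the symbol `X` are distributed as if the number
`j` were geometric and `X` were then drawn from the law of `block w j`. -/
def IsAdapted : Prop :=
  ∀ w x j, (if S.hash x = w then P (x, x) * S.sampler x j else 0) =
    diagMass P S.hash w * (2⁻¹ ^ (j + 1) * (S.block w j).law x)

lemma isFairlyStopped_idealLaw (v : ι × Option ℕ) : IsFairlyStopped (S.idealLaw v) := by
  obtain ⟨w, _ | j⟩ := v
  · exact isFairlyStopped_pure_nil
  · exact (S.block w j).fair

variable {S P}

variable (P) in
lemma exists_isAdapted [Finite α] (f : α → ι) :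
    ∃ S : KeyScheme α ι, S.hash = f ∧ S.IsAdapted P := by
  classical
  have : Nonempty α := P.support_nonempty.to_type.map Prod.fst
  let g (w : ι) (x : α) : ℝ≥0∞ := if f x = w then P (x, x) else 0
  choose q hq using fun w ↦ exists_pmf_mul_eq (g := g w) (diagMass_ne_top w)
  choose B hB using fun w ↦ DyadicCode.exists_tsum_law_eq (q w)
  choose c hc using fun x ↦ exists_pmf_mul_eq (g := fun j ↦ 2⁻¹ ^ (j + 1) * (B (f x) j).law x)
    (by rw [hB]; exact PMF.apply_ne_top _ _)
  refine ⟨⟨f, B, c⟩, rfl, fun w x j ↦ ?_⟩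
  change _ = (∑' x, g w x) * _
  split_ifs with hw
  · obtain rfl : f x = w := hw
    rw [← hc x j, hB, ← mul_assoc, hq]
    simp [g]
  · have hzero : (∑' x, g w x) * q w x = 0 := by rw [hq]; exact if_neg hw
    refine (le_antisymm ?_ zero_le).symm
    rw [← hzero, ← hB w x]
    gcongr
    exact ENNReal.le_tsum j

lemma toOuterMeasure_jointLaw_of_factor {β γ δ : Type*} (p : PMF α) (c : α → PMF β)
    (π : α → β → δ) (κ : δ → PMF γ) (v : δ) (A : Set γ) :
    (jointLaw p c fun a b ↦ κ (π a b)).toOuterMeasure {t | π t.1 t.2.1 = v ∧ t.2.2 ∈ A} =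
      (jointLaw p c fun a b ↦ κ (π a b)).toOuterMeasure {t | π t.1 t.2.1 = v} *
        (κ v).toOuterMeasure A := by
  have hsection (a : α) (b : β) :
      (κ (π a b)).toOuterMeasure {k | π a b = v ∧ k ∈ A} =
        (κ (π a b)).toOuterMeasure {_k | π a b = v} * (κ v).toOuterMeasure A := by
    by_cases hv : π a b = v
    · subst hv
      simp [toOuterMeasure_univ]
    · simp [hv]
  simp_rw [toOuterMeasure_jointLaw, Set.mem_ofPred_eq, hsection, ← mul_assoc,
    ENNReal.tsum_mul_right, ← mul_assoc, ENNReal.tsum_mul_right]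

lemma publicMsg_diag (x : α) (j : ℕ) : S.publicMsg (x, x) j = (S.hash x, some j) := by
  simp [publicMsg, bobMsg]

lemma keyLaw_diag (x : α) (j : ℕ) :
    S.keyLaw (x, x) j = PMF.pure ((S.block (S.hash x) j).code x) := by
  simp [keyLaw, publicMsg_diag, userKey]

lemma keyLaw_of_ne {a : α × α} (ha : a.1 ≠ a.2) (j : ℕ) :
    S.keyLaw a j = S.idealLaw (S.publicMsg a j) := if_neg ha

open Classical in
lemma IsAdapted.tsum_diag (hS : S.IsAdapted P) (w : ι) (j : ℕ) (h : α → ℝ≥0∞) :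
    ∑' x, (if S.hash x = w then P (x, x) * S.sampler x j * h x else 0) =
      diagMass P S.hash w * (2⁻¹ ^ (j + 1) * ∑' x, (S.block w j).law x * h x) := by
  rw [← mul_assoc, ← ENNReal.tsum_mul_left]
  refine tsum_congr fun x ↦ ?_
  rw [← mul_assoc, mul_assoc (diagMass _ _ _), ← hS w x j, ite_mul, zero_mul]

lemma IsAdapted.tsum_diag_publicMsg (hS : S.IsAdapted P) {κ : α → ℕ → PMF (List Bool)} {w : ι}
    {i : ℕ} {A : Set (List Bool)} {h : α → ℝ≥0∞}
    (hκ : ∀ x, S.hash x = w → (κ x i).toOuterMeasure A = h x) :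
    ∑' x, P (x, x) * ∑' j, S.sampler x j *
        (κ x j).toOuterMeasure {k | S.publicMsg (x, x) j = (w, some i) ∧ k ∈ A} =
      diagMass P S.hash w * (2⁻¹ ^ (i + 1) * ∑' x, (S.block w i).law x * h x) := by
  rw [← hS.tsum_diag]
  refine tsum_congr fun x ↦ ?_
  rw [tsum_eq_single i fun j hj ↦ by simp [publicMsg_diag, hj]]
  split_ifs with hw
  · simp [publicMsg_diag, hw, hκ x hw, mul_assoc]
  · simp [publicMsg_diag, hw]

lemma IsAdapted.tsum_diag_keyLaw (hS : S.IsAdapted P) (v : ι × Option ℕ) (A : Set (List Bool)) :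
    ∑' x, P (x, x) * ∑' j, S.sampler x j *
        (S.keyLaw (x, x) j).toOuterMeasure {k | S.publicMsg (x, x) j = v ∧ k ∈ A} =
      ∑' x, P (x, x) * ∑' j, S.sampler x j *
        (S.idealLaw (S.publicMsg (x, x) j)).toOuterMeasure
          {k | S.publicMsg (x, x) j = v ∧ k ∈ A} := by
  obtain ⟨w, _ | i⟩ := v
  · simp [publicMsg_diag]
  have hcopied (x : α) (hx : S.hash x = w) : (S.keyLaw (x, x) i).toOuterMeasure A =
      (PMF.pure ((S.block w i).code x)).toOuterMeasure A := by
    rw [keyLaw_diag, hx]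
  have hfresh (x : α) (hx : S.hash x = w) :
      (S.idealLaw (S.publicMsg (x, x) i)).toOuterMeasure A =
        (S.block w i).keyLaw.toOuterMeasure A := by
    rw [publicMsg_diag, hx, idealLaw]
  have hmixture : ∑' x, (S.block w i).law x *
      (PMF.pure ((S.block w i).code x)).toOuterMeasure A =
        (S.block w i).keyLaw.toOuterMeasure A := by
    rw [DyadicCode.keyLaw, PMF.map, PMF.toOuterMeasure_bind_apply]
    rfl
  rw [hS.tsum_diag_publicMsg (κ := fun x ↦ S.keyLaw (x, x)) hcopied,
    hS.tsum_diag_publicMsg (κ := fun x j ↦ S.idealLaw (S.publicMsg (x, x) j)) hfresh, hmixture,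
    ENNReal.tsum_mul_right, PMF.tsum_coe, one_mul]

lemma IsAdapted.law_eq_uncoupledLaw (hS : S.IsAdapted P) (v : ι × Option ℕ) (A : Set (List Bool)) :
    (S.law P).toOuterMeasure {t | S.publicMsg t.1 t.2.1 = v ∧ t.2.2 ∈ A} =
      (S.uncoupledLaw P).toOuterMeasure {t | S.publicMsg t.1 t.2.1 = v ∧ t.2.2 ∈ A} := by
  simp_rw [law, uncoupledLaw, toOuterMeasure_jointLaw, Set.mem_ofPred_eq]
  exact tsum_prod_congr_of_diag (hS.tsum_diag_keyLaw v A) fun a ha ↦ by simp_rw [keyLaw_of_ne ha]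

lemma IsAdapted.law_publicMsg_key (hS : S.IsAdapted P) (v : ι × Option ℕ) (A : Set (List Bool)) :
    (S.law P).toOuterMeasure {t | S.publicMsg t.1 t.2.1 = v ∧ t.2.2 ∈ A} =
      (S.law P).toOuterMeasure {t | S.publicMsg t.1 t.2.1 = v} *
        (S.idealLaw v).toOuterMeasure A := by
  have hmarginal := hS.law_eq_uncoupledLaw v Set.univ
  simp only [Set.mem_univ, and_true] at hmarginal
  rw [hS.law_eq_uncoupledLaw, hmarginal]
  exact toOuterMeasure_jointLaw_of_factor P _ S.publicMsg S.idealLaw v A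

variable (S) in
/-- The event that both users derive the ideal key. -/
def agreement : Set ((α × α) × ℕ × List Bool) :=
  {t | S.userKey t.1.1 (S.publicMsg t.1 t.2.1) = t.2.2 ∧
    S.userKey t.1.2 (S.publicMsg t.1 t.2.1) = t.2.2}

variable (S P) in
/-- The expected length of the ideal key on the event of agreement. -/
noncomputable def agreedLength : ℝ≥0∞ :=
  ∑' k : List Bool, k.length * (S.law P).toOuterMeasure {t | t.2.2 = k ∧ t ∈ S.agreement}

lemma keyLaw_agreement_of_not_collision {a : α × α}
    (ha : ¬(a.1 ≠ a.2 ∧ S.hash a.1 = S.hash a.2)) (j : ℕ) :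
    (S.keyLaw a j).toOuterMeasure {k | (a, j, k) ∈ S.agreement} = 1 := by
  obtain ⟨x, y⟩ := a
  by_cases hxy : x = y
  · subst hxy
    simp [keyLaw_diag, agreement, publicMsg_diag, userKey, PMF.toOuterMeasure_pure_apply]
  · have hhash : S.hash y ≠ S.hash x := fun h ↦ ha ⟨hxy, h.symm⟩
    have hpublic : S.publicMsg (x, y) j = (S.hash x, none) := by
      simp [publicMsg, bobMsg, hhash]
    simp [keyLaw_of_ne (a := (x, y)) hxy, agreement, hpublic, idealLaw, userKey,
      PMF.toOuterMeasure_pure_apply]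

lemma toOuterMeasure_not_collision_le_agreement :
    P.toOuterMeasure {a | ¬(a.1 ≠ a.2 ∧ S.hash a.1 = S.hash a.2)} ≤
      (S.law P).toOuterMeasure S.agreement := by
  rw [law, toOuterMeasure_jointLaw, PMF.toOuterMeasure_apply]
  refine ENNReal.tsum_le_tsum fun a ↦ ?_
  by_cases ha : ¬(a.1 ≠ a.2 ∧ S.hash a.1 = S.hash a.2)
  · simp_rw [keyLaw_agreement_of_not_collision ha, mul_one, PMF.tsum_coe, mul_one]
    exact Set.indicator_le_self _ _ _
  · rw [Set.indicator_of_notMem ha]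
    exact zero_le

lemma tsum_length_mul_idealLaw_le [Fintype α] (v : ι × Option ℕ) :
    ∑' k, (k.length : ℝ≥0∞) * S.idealLaw v k ≤ Fintype.card α := by
  classical
  obtain ⟨w, _ | j⟩ := v
  · simp [idealLaw, PMF.pure_apply]
  · exact (S.block w j).tsum_length_mul_keyLaw_le

lemma IsAdapted.agreedLength_ne_top [Finite α] (hS : S.IsAdapted P) : S.agreedLength P ≠ ⊤ := by
  have := Fintype.ofFinite α
  let pub (t : (α × α) × ℕ × List Bool) := S.publicMsg t.1 t.2.1
  have hkey (k : List Bool) : (S.law P).toOuterMeasure {t | t.2.2 = k} =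
      ∑' v, (S.law P).map pub v * S.idealLaw v k := by
    rw [← tsum_toOuterMeasure_fiber_inter _ pub]
    refine tsum_congr fun v ↦ (hS.law_publicMsg_key v {k}).trans ?_
    rw [PMF.toOuterMeasure_apply_singleton, ← PMF.toOuterMeasure_apply_singleton (PMF.map _ _),
      PMF.toOuterMeasure_map_apply]
    rfl
  refine ne_top_of_le_ne_top (ENNReal.natCast_ne_top (Fintype.card α)) ?_
  calc S.agreedLength P
      ≤ ∑' k : List Bool, k.length * (S.law P).toOuterMeasure {t | t.2.2 = k} := by
        refine ENNReal.tsum_le_tsum fun k ↦ ?_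
        gcongr
        exact And.left
    _ = ∑' v, (S.law P).map pub v * ∑' k, k.length * S.idealLaw v k := by
        simp_rw [hkey, ← ENNReal.tsum_mul_left]
        rw [ENNReal.tsum_comm]
        simp_rw [mul_left_comm]
    _ ≤ ∑' v, (S.law P).map pub v * Fintype.card α := by
        gcongr with v
        exact tsum_length_mul_idealLaw_le v
    _ = Fintype.card α := by
        rw [ENNReal.tsum_mul_right, PMF.tsum_coe, one_mul]

lemma tsum_diag_length_le_agreedLength :
    ∑' x, ∑' j, P (x, x) * S.sampler x j * ((S.block (S.hash x) j).code x).length ≤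
      S.agreedLength P := by
  classical
  have hdiag (k : List Bool) :
      ∑' x, ∑' j, P (x, x) * S.sampler x j *
        (if (S.block (S.hash x) j).code x = k then 1 else 0) ≤
      (S.law P).toOuterMeasure {t | t.2.2 = k ∧ t ∈ S.agreement} := by
    rw [law, toOuterMeasure_jointLaw]
    refine le_trans (le_of_eq ?_)
      (ENNReal.tsum_comp_le_tsum_of_injective (f := fun x ↦ (x, x))
        (fun x y h ↦ congrArg Prod.fst h) _)
    refine tsum_congr fun x ↦ ?_
    simp_rw [mul_assoc, ENNReal.tsum_mul_left, keyLaw_diag, PMF.toOuterMeasure_pure_apply]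
    simp [agreement, publicMsg_diag, userKey]
  calc
    _ = ∑' k : List Bool, k.length * ∑' x, ∑' j, P (x, x) * S.sampler x j *
          (if (S.block (S.hash x) j).code x = k then 1 else 0) := by
        simp_rw [← ENNReal.tsum_mul_left]
        rw [ENNReal.tsum_comm (α := List Bool)]
        refine tsum_congr fun x ↦ ?_
        rw [ENNReal.tsum_comm (α := List Bool)]
        refine tsum_congr fun j ↦ ?_
        simp [mul_comm]
    _ ≤ S.agreedLength P := by
        rw [agreedLength]
        gcongr with k
        exact hdiag k

lemma IsAdapted.tsum_sampler_diag (hS : S.IsAdapted P) (j : ℕ) :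
    ∑' x, P (x, x) * S.sampler x j = (∑' x, P (x, x)) * 2⁻¹ ^ (j + 1) := by
  classical
  calc ∑' x, P (x, x) * S.sampler x j
      = ∑' w, ∑' x, if S.hash x = w then P (x, x) * S.sampler x j else 0 := by
        rw [ENNReal.tsum_comm]
        simp
    _ = ∑' w, diagMass P S.hash w * 2⁻¹ ^ (j + 1) := by
        simp_rw [hS _ _ j, ENNReal.tsum_mul_left, PMF.tsum_coe, mul_one]
    _ = (∑' x, P (x, x)) * 2⁻¹ ^ (j + 1) := by
        rw [ENNReal.tsum_mul_right, tsum_diagMass]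

variable (S P) in
/-- The number of bits needed to describe the symbol `x` given `X = Y` and the hash of `X`. -/
noncomputable def residualBits (x : α) : ℝ :=
  -Real.logb 2 ((P (x, x)).toReal / (diagMass P S.hash (S.hash x)).toReal)

lemma IsAdapted.residualBits_le (hS : S.IsAdapted P) {x : α} {j : ℕ}
    (hx : P (x, x) * S.sampler x j ≠ 0) :
    S.residualBits P x ≤ (j + 1 : ℕ) + ((S.block (S.hash x) j).code x).length := by
  set Q := diagMass P S.hash (S.hash x)
  set n := ((S.block (S.hash x) j).code x).length
  have hadapted : P (x, x) * S.sampler x j = Q * (2⁻¹ ^ (j + 1) * (S.block (S.hash x) j).law x) :=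
    (if_pos rfl).symm.trans (hS (S.hash x) x j)
  have hlaw : (S.block (S.hash x) j).law x ≠ 0 := fun h ↦ hx (by rw [hadapted, h]; simp)
  have hle : Q * 2⁻¹ ^ (j + 1 + n) ≤ P (x, x) := by
    rw [pow_add, ← (S.block (S.hash x) j).law_eq x hlaw, ← hadapted]
    exact mul_le_of_le_one_right' ((S.sampler x).coe_le_one j)
  have hQ : 0 < Q.toReal :=
    ENNReal.toReal_pos (fun h ↦ hx (by rw [hadapted, h, zero_mul])) (diagMass_ne_top _)
  have hratio : ((2 : ℝ) ^ (j + 1 + n))⁻¹ ≤ (P (x, x)).toReal / Q.toReal := by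
    rw [le_div_iff₀' hQ]
    simpa using ENNReal.toReal_mono (P.apply_ne_top _) hle
  have hlog := Real.logb_le_logb_of_le one_lt_two (by positivity) hratio
  rw [Real.logb_inv, Real.logb_pow, Real.logb_self_eq_one one_lt_two] at hlog
  push_cast at hlog ⊢
  rw [residualBits]
  linarith

lemma IsAdapted.tsum_residualBits_le (hS : S.IsAdapted P) :
    ∑' x, P (x, x) * ENNReal.ofReal (S.residualBits P x) ≤
      2 * (∑' x, P (x, x)) + S.agreedLength P := by
  have hpointwise (x : α) (j : ℕ) :
      P (x, x) * S.sampler x j * ENNReal.ofReal (S.residualBits P x) ≤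
        P (x, x) * S.sampler x j * (j + 1 : ℕ) +
          P (x, x) * S.sampler x j * ((S.block (S.hash x) j).code x).length := by
    by_cases hx : P (x, x) * S.sampler x j = 0
    · simp [hx]
    · rw [← mul_add]
      gcongr
      refine ENNReal.ofReal_le_of_le_toReal ((hS.residualBits_le hx).trans_eq ?_)
      rw [← Nat.cast_add, ← Nat.cast_add, ENNReal.toReal_natCast]
  have hnumber : ∑' x, ∑' j, P (x, x) * S.sampler x j * (j + 1 : ℕ) = 2 * ∑' x, P (x, x) := by
    rw [ENNReal.tsum_comm]
    simp_rw [ENNReal.tsum_mul_right, hS.tsum_sampler_diag, mul_assoc, ENNReal.tsum_mul_left,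
      mul_comm ((2⁻¹ : ℝ≥0∞) ^ _), tsum_succ_mul_inv_two_pow_succ, mul_comm]
  calc ∑' x, P (x, x) * ENNReal.ofReal (S.residualBits P x)
      = ∑' x, ∑' j, P (x, x) * S.sampler x j * ENNReal.ofReal (S.residualBits P x) := by
        simp_rw [ENNReal.tsum_mul_right, ENNReal.tsum_mul_left, PMF.tsum_coe, mul_one]
    _ ≤ ∑' x, ∑' j, (P (x, x) * S.sampler x j * (j + 1 : ℕ) +
          P (x, x) * S.sampler x j * ((S.block (S.hash x) j).code x).length) := by
        gcongr with x j
        exact hpointwise x j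
    _ ≤ 2 * (∑' x, P (x, x)) + S.agreedLength P := by
        simp_rw [ENNReal.tsum_add, hnumber]
        gcongr
        exact tsum_diag_length_le_agreedLength

end KeyScheme

/-! ### Entropy lost to the hash -/

section FiniteSums

variable {α : Type*} [Fintype α] (p : PMF α)

lemma sum_toReal_pmf : ∑ a, (p a).toReal = 1 := by
  rw [← ENNReal.toReal_sum fun _ _ ↦ p.apply_ne_top _, ← tsum_fintype (L := .unconditional _),
    p.tsum_coe, ENNReal.toReal_one]

lemma toReal_toOuterMeasure_eq_sum (s : α → Prop) [DecidablePred s] :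
    (p.toOuterMeasure {a | s a}).toReal = ∑ a with s a, (p a).toReal := by
  rw [PMF.toOuterMeasure_apply_fintype, Finset.sum_filter,
    ENNReal.toReal_sum fun a _ ↦ ne_top_of_le_ne_top (p.apply_ne_top a)
      (Set.indicator_le_self _ _ _)]
  simp [Set.indicator_apply, apply_ite ENNReal.toReal]

end FiniteSums

lemma sum_negMulLog_le_log_card {ι : Type*} [Fintype ι] [Nonempty ι] {q : ι → ℝ}
    (hq : ∀ w, 0 ≤ q w) (hsum : ∑ w, q w = 1) :
    ∑ w, Real.negMulLog (q w) ≤ Real.log (Fintype.card ι) := by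
  have hcard : (0 : ℝ) < Fintype.card ι := by exact_mod_cast Fintype.card_pos
  have hjensen := Real.concaveOn_negMulLog.le_map_sum (t := Finset.univ) (p := q)
    (w := fun _ ↦ (Fintype.card ι : ℝ)⁻¹) (fun _ _ ↦ by positivity)
    (by simp [hcard.ne']) (fun w _ ↦ hq w)
  simp only [smul_eq_mul, ← Finset.mul_sum, hsum, mul_one] at hjensen
  rw [Real.negMulLog, Real.log_inv, neg_mul_neg] at hjensen
  exact le_of_mul_le_mul_left hjensen (inv_pos.2 hcard)

open Classical in
lemma entropy_sub_logb_card_le {α ι : Type*} [Fintype α] [Fintype ι] [Nonempty ι] {q : α → ℝ}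
    (hq : ∀ x, 0 ≤ q x) (hsum : ∑ x, q x = 1) (f : α → ι) :
    ∑ x, -q x * Real.logb 2 (q x) - Real.logb 2 (Fintype.card ι) ≤
      ∑ x, q x * -Real.logb 2 (q x / ∑ y with f y = f x, q y) := by
  set Q : ι → ℝ := fun w ↦ ∑ y with f y = w, q y
  have hentropy : ∑ w, Real.negMulLog (Q w) / Real.log 2 ≤ Real.logb 2 (Fintype.card ι) := by
    rw [← Finset.sum_div, Real.logb]
    gcongr
    exact sum_negMulLog_le_log_card (fun w ↦ Finset.sum_nonneg fun y _ ↦ hq y)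
      ((Finset.sum_fiberwise _ _ _).trans hsum)
  have hfiber : ∑ w, Real.negMulLog (Q w) / Real.log 2 = ∑ x, -q x * Real.logb 2 (Q (f x)) := by
    rw [← Finset.sum_fiberwise (g := f)]
    refine Finset.sum_congr rfl fun w _ ↦ ?_
    rw [Finset.sum_congr rfl fun x hx ↦ by rw [(Finset.mem_filter.1 hx).2], ← Finset.sum_mul,
      Finset.sum_neg_distrib, Real.negMulLog, Real.logb, mul_div_assoc]
  have hchain (x : α) : q x * -Real.logb 2 (q x / Q (f x)) =
      -q x * Real.logb 2 (q x) - -q x * Real.logb 2 (Q (f x)) := by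
    rcases (hq x).eq_or_lt with hx | hx
    · simp [← hx]
    · have hQ : 0 < Q (f x) := hx.trans_le
        (Finset.single_le_sum (f := q) (fun y _ ↦ hq y) (by simp))
      rw [Real.logb_div hx.ne' hQ.ne']
      ring
  rw [Finset.sum_congr rfl fun x _ ↦ hchain x, Finset.sum_sub_distrib, ← hfiber]
  linarith

open Classical in
lemma sum_mul_entropy_sub_logb_card_le {α ι : Type*} [Fintype α] [Fintype ι] [Nonempty ι]
    {d : α → ℝ} (hd : ∀ x, 0 ≤ d x) (hpos : 0 < ∑ x, d x) (f : α → ι) :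
    (∑ x, d x) * (∑ x, -(d x / ∑ y, d y) * Real.logb 2 (d x / ∑ y, d y) -
        Real.logb 2 (Fintype.card ι)) ≤
      ∑ x, d x * -Real.logb 2 (d x / ∑ y with f y = f x, d y) := by
  have hentropy := entropy_sub_logb_card_le (q := fun x ↦ d x / ∑ y, d y)
    (fun x ↦ div_nonneg (hd x) hpos.le) (by rw [← Finset.sum_div, div_self hpos.ne']) f
  refine (mul_le_mul_of_nonneg_left hentropy hpos.le).trans_eq ?_
  rw [Finset.mul_sum]
  refine Finset.sum_congr rfl fun x _ ↦ ?_
  rw [← Finset.sum_div, div_div_div_cancel_right₀ hpos.ne', ← mul_assoc,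
    mul_div_cancel₀ _ hpos.ne']

namespace KeyScheme

variable {α ι : Type*} {S : KeyScheme α ι} {P : PMF (α × α)}

open Classical in
lemma toReal_diagMass [Fintype α] (f : α → ι) (w : ι) :
    (diagMass P f w).toReal = ∑ x with f x = w, (P (x, x)).toReal := by
  rw [diagMass, tsum_fintype, ← Finset.sum_filter, ENNReal.toReal_sum fun _ _ ↦ P.apply_ne_top _]

lemma IsAdapted.entropy_le_agreedLength [Fintype α] [Fintype ι] [Nonempty ι]
    (hS : S.IsAdapted P) (hpos : 0 < ∑ x, (P (x, x)).toReal) :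
    (∑ x, (P (x, x)).toReal) *
      (∑ x, -((P (x, x)).toReal / ∑ y, (P (y, y)).toReal) *
        Real.logb 2 ((P (x, x)).toReal / ∑ y, (P (y, y)).toReal) -
          Real.logb 2 (Fintype.card ι) - 2) ≤
      (S.agreedLength P).toReal := by
  have hdiag : ∑ x, P (x, x) ≠ ⊤ := ENNReal.sum_ne_top.2 fun _ _ ↦ P.apply_ne_top _
  have hbits : ∑ x, (P (x, x)).toReal * S.residualBits P x ≤
      2 * ∑ x, (P (x, x)).toReal + (S.agreedLength P).toReal := by
    have hreal := hS.tsum_residualBits_le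
    simp_rw [tsum_fintype] at hreal
    replace hreal := ENNReal.toReal_mono (ENNReal.add_ne_top.2
      ⟨ENNReal.mul_ne_top ENNReal.ofNat_ne_top hdiag, hS.agreedLength_ne_top⟩) hreal
    rw [ENNReal.toReal_add (ENNReal.mul_ne_top ENNReal.ofNat_ne_top hdiag) hS.agreedLength_ne_top,
      ENNReal.toReal_mul, ENNReal.toReal_ofNat, ENNReal.toReal_sum fun _ _ ↦ P.apply_ne_top _,
      ENNReal.toReal_sum fun _ _ ↦ ENNReal.mul_ne_top (P.apply_ne_top _) ENNReal.ofReal_ne_top]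
      at hreal
    refine le_trans (Finset.sum_le_sum fun x _ ↦ ?_) hreal
    rw [ENNReal.toReal_mul, ENNReal.toReal_ofReal']
    gcongr
    exact le_max_left _ _
  have hentropy := sum_mul_entropy_sub_logb_card_le (fun x ↦ ENNReal.toReal_nonneg) hpos S.hash
  simp_rw [← toReal_diagMass] at hentropy
  change _ ≤ ∑ x, (P (x, x)).toReal * S.residualBits P x at hentropy
  linarith

open Classical in
lemma one_sub_sum_collision_le_agreement [Fintype α] :
    1 - ∑ a with a.1 ≠ a.2 ∧ S.hash a.1 = S.hash a.2, (P a).toReal ≤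
      ((S.law P).toOuterMeasure S.agreement).toReal := by
  have hagree := ENNReal.toReal_mono (toOuterMeasure_ne_top _ _)
    (toOuterMeasure_not_collision_le_agreement (S := S) (P := P))
  rw [toReal_toOuterMeasure_eq_sum] at hagree
  rw [← sum_toReal_pmf P, ← Finset.sum_filter_add_sum_filter_not Finset.univ
    (fun a : α × α ↦ a.1 ≠ a.2 ∧ S.hash a.1 = S.hash a.2), add_sub_cancel_left]
  exact hagree

variable (P ι) in
lemma exists_isAdapted_le_agreement [Fintype α] [Fintype ι] [Nonempty ι] :
    ∃ S : KeyScheme α ι, S.IsAdapted P ∧ 1 - (1 - ∑ x, (P (x, x)).toReal) / Fintype.card ι ≤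
      ((S.law P).toOuterMeasure S.agreement).toReal := by
  classical
  obtain ⟨f, hf⟩ := exists_card_mul_sum_collision_le (ι := ι) fun a ↦ (P a).toReal
  obtain ⟨S, rfl, hS⟩ := exists_isAdapted P f
  have hoff : ∑ a with a.1 ≠ a.2, (P a).toReal = 1 - ∑ x, (P (x, x)).toReal := by
    have hdiag : ∑ a with a.1 = a.2, (P a).toReal = ∑ x, (P (x, x)).toReal := by
      simp [Finset.sum_filter, Fintype.sum_prod_type]
    rw [← hdiag, ← sum_toReal_pmf P, eq_sub_iff_add_eq']
    exact Finset.sum_filter_add_sum_filter_not _ _ _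
  refine ⟨S, hS, le_trans ?_ one_sub_sum_collision_le_agreement⟩
  rw [hoff, ← le_div_iff₀' (by exact_mod_cast Fintype.card_pos)] at hf
  gcongr

end KeyScheme

/-! ### Realization on a probability space -/

section Realization

variable {α β γ : Type*}

lemma exists_realization [Countable α] [Countable γ] (p : PMF α) (ρ : PMF ℕ) (s : α → ℕ → β)
    (κ : α → β → PMF γ) :
    ∃ (ν : PMF ℕ) (A : ℕ → α) (R : ℕ → ℕ) (K : ℕ → γ),
      (∀ a, ν.toMeasure {n | A n = a} = p a) ∧
      (∀ a r, ν.toMeasure {n | A n = a ∧ R n = r} =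
        ν.toMeasure {n | A n = a} * ν.toMeasure {n | R n = r}) ∧
      ν.map (fun n ↦ (A n, s (A n) (R n), K n)) = jointLaw p (fun a ↦ ρ.map (s a)) κ := by
  obtain ⟨ν, g, hg⟩ := exists_map_nat_eq (jointLaw p (fun _ ↦ ρ) fun a r ↦ κ a (s a r))
  have hprod (s : Set α) (t : Set ℕ) : ν.toMeasure {n | (g n).1 ∈ s ∧ (g n).2.1 ∈ t} =
      p.toOuterMeasure s * ρ.toOuterMeasure t := by
    trans (ν.map g).toOuterMeasure {u | u.1 ∈ s ∧ u.2.1 ∈ t}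
    · rw [PMF.toMeasure_apply_eq_toOuterMeasure, PMF.toOuterMeasure_map_apply]
      rfl
    rw [hg, toOuterMeasure_jointLaw, PMF.toOuterMeasure_apply, PMF.toOuterMeasure_apply,
      ← ENNReal.tsum_mul_right]
    refine tsum_congr fun a ↦ ?_
    by_cases ha : a ∈ s
    · rw [Set.indicator_of_mem ha]
      congr 1
      refine tsum_congr fun r ↦ ?_
      by_cases hr : r ∈ t <;> simp [ha, hr, toOuterMeasure_univ]
    · simp [ha]
  have hfst (a : α) : ν.toMeasure {n | (g n).1 = a} = p a := by
    simpa [PMF.toOuterMeasure_apply_singleton, toOuterMeasure_univ] using hprod {a} Set.univ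
  have hsnd (r : ℕ) : ν.toMeasure {n | (g n).2.1 = r} = ρ r := by
    simpa [PMF.toOuterMeasure_apply_singleton, toOuterMeasure_univ] using hprod Set.univ {r}
  refine ⟨ν, fun n ↦ (g n).1, fun n ↦ (g n).2.1, fun n ↦ (g n).2.2, hfst, fun a r ↦ ?_, ?_⟩
  · rw [hfst, hsnd]
    simpa [PMF.toOuterMeasure_apply_singleton] using hprod {a} {r}
  · rw [← jointLaw_map_map, ← hg, PMF.map_comp]
    rfl

end Realization

namespace KeyScheme

variable {Ω α ι : Type*} [MeasurableSpace Ω] [DiscreteMeasurableSpace Ω] {S : KeyScheme α ι}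
  {P : PMF (α × α)} {ν : PMF Ω} {Φ : Ω → (α × α) × ℕ × List Bool}

lemma toMeasure_preimage_eq_law (hΦ : ν.map Φ = S.law P) (T : Set ((α × α) × ℕ × List Bool)) :
    ν.toMeasure {n | Φ n ∈ T} = (S.law P).toOuterMeasure T := by
  rw [PMF.toMeasure_apply_eq_toOuterMeasure, ← hΦ, PMF.toOuterMeasure_map_apply]
  rfl

lemma IsAdapted.isCondRSBS (hS : S.IsAdapted P) (hΦ : ν.map Φ = S.law P) :
    IsCondRSBS ν.toMeasure (fun n ↦ (Φ n).2.2) (fun n ↦ S.publicMsg (Φ n).1 (Φ n).2.1) := by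
  refine isCondRSBS_of_conditional_law (fun _ ↦ .of_discrete) S.isFairlyStopped_idealLaw
    fun v A ↦ ?_
  have hconditional := hS.law_publicMsg_key v A
  rwa [← toMeasure_preimage_eq_law hΦ, ← toMeasure_preimage_eq_law hΦ] at hconditional

lemma toReal_agreedLength (hΦ : ν.map Φ = S.law P) :
    (S.agreedLength P).toReal = ∑' k : List Bool, (k.length : ℝ) *
      (ν.toMeasure {n | (Φ n).2.2 = k ∧ S.userKey (Φ n).1.1 (S.publicMsg (Φ n).1 (Φ n).2.1) = k ∧
        S.userKey (Φ n).1.2 (S.publicMsg (Φ n).1 (Φ n).2.1) = k}).toReal := by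
  rw [agreedLength, ENNReal.tsum_toReal_eq fun k ↦
    ENNReal.mul_ne_top (ENNReal.natCast_ne_top _) (toOuterMeasure_ne_top _ _)]
  refine tsum_congr fun k ↦ ?_
  rw [ENNReal.toReal_mul, ENNReal.toReal_natCast, ← toMeasure_preimage_eq_law hΦ]
  congr 3
  ext n
  refine and_congr_right ?_
  rintro rfl
  rfl

variable (S P) in
lemma exists_realization_law [Finite α] :
    ∃ (s : α → ℕ → ℕ) (ν : PMF ℕ) (A : ℕ → α × α) (R : ℕ → ℕ) (K : ℕ → List Bool),
      (∀ a, ν.toMeasure {n | A n = a} = P a) ∧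
      (∀ a r, ν.toMeasure {n | A n = a ∧ R n = r} =
        ν.toMeasure {n | A n = a} * ν.toMeasure {n | R n = r}) ∧
      ν.map (fun n ↦ (A n, s (A n).2 (R n), K n)) = S.law P := by
  obtain ⟨ρ, s, hs⟩ := exists_common_seed S.sampler
  have hreal := exists_realization P ρ (fun a ↦ s a.2) S.keyLaw
  simp_rw [hs] at hreal
  exact ⟨s, hreal⟩

end KeyScheme

section PairLaw

variable {Ω α : Type*} [MeasurableSpace Ω] {μ : Measure Ω} {X Y : Ω → α}

lemma exists_pair_law [Finite α] [IsProbabilityMeasure μ]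
    (hmeas : ∀ x y : α, MeasurableSet {ω | X ω = x ∧ Y ω = y}) :
    ∃ P : PMF (α × α), ∀ x y, P (x, y) = μ {ω | X ω = x ∧ Y ω = y} := by
  let _ : MeasurableSpace (α × α) := ⊤
  have hXY : Measurable fun ω ↦ (X ω, Y ω) := by
    refine measurable_to_countable' fun a ↦ ?_
    convert hmeas a.1 a.2 using 1
    ext ω
    simp [Prod.ext_iff]
  have := Measure.isProbabilityMeasure_map (μ := μ) hXY.aemeasurable
  refine ⟨(μ.map fun ω ↦ (X ω, Y ω)).toPMF, fun x y ↦ ?_⟩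
  rw [Measure.toPMF_apply, Measure.map_apply hXY (.singleton _)]
  congr 1
  ext ω
  simp

variable {P : PMF (α × α)}

lemma measurableSet_eq_of_pair [Countable α]
    (hmeas : ∀ x y : α, MeasurableSet {ω | X ω = x ∧ Y ω = y}) :
    MeasurableSet {ω | X ω = Y ω} := by
  convert MeasurableSet.iUnion fun x ↦ hmeas x x
  ext ω
  simp [eq_comm]

lemma toReal_measure_eq_eq_sum [Fintype α]
    (hmeas : ∀ x y : α, MeasurableSet {ω | X ω = x ∧ Y ω = y})
    (hP : ∀ x y, P (x, y) = μ {ω | X ω = x ∧ Y ω = y}) :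
    (μ {ω | X ω = Y ω}).toReal = ∑ x, (P (x, x)).toReal := by
  have hunion : {ω | X ω = Y ω} = ⋃ x, {ω | X ω = x ∧ Y ω = x} := by
    ext ω
    simp [eq_comm]
  rw [hunion, measure_iUnion _ fun x ↦ hmeas x x, tsum_fintype,
    ENNReal.toReal_sum fun x _ ↦ (hP x x ▸ P.apply_ne_top _)]
  · simp_rw [hP]
  · intro x y hxy
    exact Set.disjoint_left.2 fun ω hx hy ↦ hxy (hx.1.symm.trans hy.1)

lemma toReal_cond_eq_apply [Fintype α]
    (hmeas : ∀ x y : α, MeasurableSet {ω | X ω = x ∧ Y ω = y})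
    (hP : ∀ x y, P (x, y) = μ {ω | X ω = x ∧ Y ω = y}) (x : α) :
    ((μ[|{ω | X ω = Y ω}]) {ω | X ω = x}).toReal =
      (P (x, x)).toReal / ∑ y, (P (y, y)).toReal := by
  rw [cond_apply (measurableSet_eq_of_pair hmeas), ENNReal.toReal_mul, ENNReal.toReal_inv,
    toReal_measure_eq_eq_sum hmeas hP, hP, ← div_eq_inv_mul]
  congr 3
  ext ω
  simp only [Set.mem_inter_iff, Set.mem_ofPred_eq]
  grind

end PairLaw

/-- Key agreement in the almost common randomness model. Given jointly distributed
`X, Y` on a finite alphabet `α` with `p := P(X = Y) > 0` and an integer `m ≥ 1`, there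
exist (on an enlarged probability space carrying randomness `R` independent of `(X, Y)`)
a hash `f : α → {1,…,m}`, public discussion `W₁ := f(X)`, `W₂ := h(Y, W₁, R)`, keys
`K_A := g_A(X, W₁, W₂)`, `K_B := g_B(Y, W₁, W₂)`, and an ideal key `K`, such that `K` is
a conditionally randomly-stopped bit sequence given `(W₁, W₂)`,
`P(K_A = K_B = K) ≥ 1 − (1 − p)/m`, and
`E[|K|·1{K_A = K_B = K}] ≥ p·(H(X | X = Y) − log₂ m − 2)`, where `H(X | X = Y)` is the
Shannon entropy of the conditional distribution of `X` given the event `{X = Y}`. -/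
theorem stmt15 {Ω α : Type*} [MeasurableSpace Ω] [Fintype α]
    (μ : Measure Ω) [IsProbabilityMeasure μ] (X Y : Ω → α)
    (hXYmeas : ∀ x y : α, MeasurableSet {ω | X ω = x ∧ Y ω = y})
    (hp : 0 < μ {ω | X ω = Y ω})
    (m : ℕ) (hm : 1 ≤ m) :
    ∃ (Ω' : Type) (_ : MeasurableSpace Ω') (μ' : Measure Ω')
      (_ : IsProbabilityMeasure μ') (X' Y' : Ω' → α)
      (γ : Type) (_ : Countable γ) (R : Ω' → γ) (β : Type) (_ : Countable β)
      (f : α → Fin m) (h : α → Fin m → γ → β)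
      (gA : α → Fin m → β → List Bool) (gB : α → Fin m → β → List Bool)
      (K : Ω' → List Bool),
      (∀ x y : α, MeasurableSet {ω | X' ω = x ∧ Y' ω = y}) ∧
      (∀ r : γ, MeasurableSet {ω | R ω = r}) ∧
      (∀ k : List Bool, MeasurableSet {ω | K ω = k}) ∧
      -- (X', Y') has the same joint distribution as (X, Y)
      (∀ x y : α, μ' {ω | X' ω = x ∧ Y' ω = y} = μ {ω | X ω = x ∧ Y ω = y}) ∧
      -- the local randomness R is independent of (X', Y')
      (∀ (x y : α) (r : γ), μ' {ω | (X' ω = x ∧ Y' ω = y) ∧ R ω = r} =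
        μ' {ω | X' ω = x ∧ Y' ω = y} * μ' {ω | R ω = r}) ∧
      -- with W₁ := f(X'), W₂ := h(Y', W₁, R), K_A := gA(X', W₁, W₂), K_B := gB(Y', W₁, W₂):
      (IsCondRSBS μ' K (fun ω => (f (X' ω), h (Y' ω) (f (X' ω)) (R ω))) ∧
       1 - (1 - (μ {ω | X ω = Y ω}).toReal) / m ≤
         (μ' {ω | gA (X' ω) (f (X' ω)) (h (Y' ω) (f (X' ω)) (R ω)) = K ω ∧
                  gB (Y' ω) (f (X' ω)) (h (Y' ω) (f (X' ω)) (R ω)) = K ω}).toReal ∧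
       (μ {ω | X ω = Y ω}).toReal *
         ((∑' x : α, -(((μ[|{ω | X ω = Y ω}]) {ω | X ω = x}).toReal) *
             Real.logb 2 ((μ[|{ω | X ω = Y ω}]) {ω | X ω = x}).toReal)
           - Real.logb 2 m - 2) ≤
         ∑' k : List Bool, (k.length : ℝ) *
           (μ' {ω | K ω = k ∧ gA (X' ω) (f (X' ω)) (h (Y' ω) (f (X' ω)) (R ω)) = k ∧
                    gB (Y' ω) (f (X' ω)) (h (Y' ω) (f (X' ω)) (R ω)) = k}).toReal) := by
  obtain ⟨P, hP⟩ := exists_pair_law (μ := μ) hXYmeas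
  have hdiag := toReal_measure_eq_eq_sum hXYmeas hP
  have hpos : 0 < ∑ x, (P (x, x)).toReal := hdiag ▸ ENNReal.toReal_pos hp.ne' (measure_ne_top _ _)
  have : NeZero m := ⟨by omega⟩
  obtain ⟨S, hS, hagree⟩ := KeyScheme.exists_isAdapted_le_agreement (Fin m) P
  have hlength := hS.entropy_le_agreedLength hpos
  obtain ⟨s, ν, A, R, K, hA, hindep, hlaw⟩ := S.exists_realization_law P
  rw [Fintype.card_fin, ← KeyScheme.toMeasure_preimage_eq_law hlaw] at hagree
  rw [Fintype.card_fin, KeyScheme.toReal_agreedLength hlaw] at hlength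
  refine ⟨ℕ, inferInstance, ν.toMeasure, inferInstance, fun n ↦ (A n).1, fun n ↦ (A n).2,
    ℕ, inferInstance, R, Option ℕ, inferInstance, S.hash, fun y w r ↦ S.bobMsg y w (s y r),
    fun x w o ↦ S.userKey x (w, o), fun y w o ↦ S.userKey y (w, o), K,
    fun _ _ ↦ .of_discrete, fun _ ↦ .of_discrete, fun _ ↦ .of_discrete, fun x y ↦ ?_,
    fun x y r ↦ ?_, hS.isCondRSBS hlaw, hdiag ▸ hagree, ?_⟩
  · simpa only [hP, Prod.ext_iff] using hA (x, y)
  · simpa only [Prod.ext_iff] using hindep (x, y) r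
  · simp only [toReal_cond_eq_apply hXYmeas hP, hdiag, tsum_fintype]
    exact hlength
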